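/- Let a, b, α > 0 and β ∈ ℝ, let ψ be a smooth real function on a neighborhood of 0 with ψ(0)=b, ψ'(0)=−α, ψ''(0)=2β, and define m(r) := ψ((a−r)²) for r near a; for ν < b close to b let R(ν) be the unique solution near a of m(R)=ν, φ(ν) := 2∫_{R(ν)}^{a} ν/(m(r)√(m(r)²−ν²)) dr, and θ_cut := π/√(2αb). For ν close to b, write η := arccos(ν/b), and let r_ν be the unique solution near a of the equation ∫_{r_ν}^{a} ν/(m(s)√(m(s)²−ν²)) ds = φ(ν) − θ_cut (the integral taken with the usual orientation, so it is negative when r_ν > a). Then, as η → 0⁺, r_ν = a − ((6bβ − α²)·√b·π / (16√2 · α^{5/2}))·η³ + O(η⁵). -/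

import Mathlib

open Set Asymptotics Filter Real
open scoped Topology

/-!
Let `X = a - R ν` be the distance from the equator to the turning point, so that `ν = ψ(X²)`, and
let `x = a - r`. The substitution `u = X sin t` removes the singularity of the angle integral at the
turning point: uniformly in `t`, the new integrand is `θ (1 + X² q(t)) + O(X⁴)`, where
`θ = 1 / √(2αb)` and `q` is an explicit trigonometric polynomial with mean `κ = (6bβ - α²) / (8αb)`
on `[0, π/2]`. The angle swept down to `x` is therefore `θ (τ + X² ∫₀^τ q) + O(X⁴ τ)` with
`τ = arcsin (x / X)`, and `φ(ν) - θ_cut = π θ κ X² + O(X⁴)`. Equating the two gives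
`τ = π κ X² + O(X⁴)`, hence `x = X sin τ = π κ X³ + O(X⁵)`. Finally `cos η = ψ(X²) / b` gives
`X² = b / (2α) η² + O(η⁴)`.

The formula for the swept angle holds for every small `x`, also beyond the turning point: there the
integrand is `0` because `√` vanishes on nonpositive numbers, and `arcsin (x / X)` is constant.
-/

/-! ### Asymptotic estimates -/

theorem tendsto_sq_nhdsGT_zero : Tendsto (fun x : ℝ => x ^ 2) (𝓝[>] 0) (𝓝 0) :=
  (Continuous.tendsto' (by fun_prop) 0 0 (by simp)).mono_left nhdsWithin_le_nhds

section Asymptotics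

variable {ι : Type*} {l : Filter ι}

theorem isBigO_of_sub_const_mul_isBigO_mul {e u w : ι → ℝ} {k : ℝ} (hk : k ≠ 0)
    (he : Tendsto e l (𝓝 0)) (h : (fun i => w i - k * u i) =O[l] fun i => e i * u i) :
    u =O[l] w := by
  have heu : (fun i => e i * u i) =o[l] u := by
    simpa using ((isLittleO_one_iff ℝ).2 he).mul_isBigO (isBigO_refl u l)
  have hequiv : IsEquivalent l w fun i => k * u i :=
    (h.trans_isLittleO heu).const_mul_right hk
  exact (isBigO_const_mul_left_iff hk).1 hequiv.isBigO_symm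

theorem isBigO_sub_const_mul_of_add_mul {τ z w : ι → ℝ} {k : ℝ} (hτ : τ =O[l] fun _ => (1 : ℝ))
    (hz : z =O[l] fun _ => (1 : ℝ)) (hw : w =O[l] τ)
    (h : (fun i => τ i - k * z i + z i * w i) =O[l] fun i => z i ^ 2) :
    (fun i => τ i - k * z i) =O[l] fun i => z i ^ 2 := by
  have hzw : ∀ {g : ι → ℝ}, τ =O[l] g → (fun i => z i * w i) =O[l] fun i => z i * g i :=
    fun hg => (isBigO_refl z l).mul (hw.trans hg)
  have hz2 : (fun i => z i ^ 2) =O[l] z := by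
    simpa [sq] using (isBigO_refl z l).mul hz
  have hτz : τ =O[l] z := by
    refine (((h.trans hz2).sub (by simpa using hzw hτ)).add
      (isBigO_const_mul_self k z l)).congr_left fun i => ?_
    ring
  exact (h.sub (by simpa only [sq] using hzw hτz)).congr_left fun i => by ring

theorem isBigO_pow_three_sub_pow_three {x y : ι → ℝ} (hx : ∀ᶠ i in l, 0 ≤ x i)
    (hy : ∀ᶠ i in l, 0 ≤ y i) :
    (fun i => x i ^ 3 - y i ^ 3) =O[l] fun i => (x i ^ 2 - y i ^ 2) * (x i + y i) := by
  refine IsBigO.of_bound 1 ?_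
  filter_upwards [hx, hy] with i hxi hyi
  have hcube : x i ^ 3 - y i ^ 3 = (x i - y i) * (x i ^ 2 + x i * y i + y i ^ 2) := by ring
  have hsq : (x i ^ 2 - y i ^ 2) * (x i + y i) = (x i - y i) * (x i + y i) ^ 2 := by ring
  rw [hcube, hsq, one_mul, norm_mul, norm_mul]
  gcongr ‖x i - y i‖ * ?_
  rw [norm_of_nonneg (by positivity), norm_of_nonneg (by positivity)]
  nlinarith [mul_nonneg hxi hyi]

theorem isBigO_sub_of_hasDerivAt_isBigO_pow {E : Type*} [NormedAddCommGroup E] [NormedSpace ℝ E]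
    {f f' : ℝ → E} {c : ℝ} {k : ℕ} (hf : ∀ᶠ w in 𝓝 c, HasDerivAt f (f' w) w)
    (hf' : f' =O[𝓝 c] fun w => (w - c) ^ k) :
    (fun p : ℝ × ℝ => f p.1 - f p.2) =O[𝓝 (c, c)]
      fun p => ‖p - (c, c)‖ ^ k * (p.1 - p.2) := by
  obtain ⟨C, hC, hf'C⟩ := hf'.exists_nonneg
  obtain ⟨ε, hε, hball⟩ := Metric.eventually_nhds_iff.1 (hf.and hf'C.bound)
  refine IsBigO.of_bound C ?_
  filter_upwards [Metric.ball_mem_nhds (c, c) hε] with p hp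
  have hmem : ∀ w ∈ Metric.closedBall c ‖p - (c, c)‖, dist w c < ε := fun w hw =>
    (Metric.mem_closedBall.1 hw).trans_lt (by simpa only [dist_eq_norm] using Metric.mem_ball.1 hp)
  have hbound : ∀ w ∈ Metric.closedBall c ‖p - (c, c)‖, ‖f' w‖ ≤ C * ‖p - (c, c)‖ ^ k := by
    intro w hw
    refine (hball (hmem w hw)).2.trans ?_
    rw [norm_pow, ← dist_eq_norm]
    gcongr
    exact Metric.mem_closedBall.1 hw
  have hmvt := (convex_closedBall c ‖p - (c, c)‖).norm_image_sub_le_of_norm_hasDerivWithin_le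
    (fun w hw => (hball (hmem w hw)).1.hasDerivWithinAt) hbound
    (x := p.2) (y := p.1) (by simpa [dist_eq_norm] using norm_snd_le (p - (c, c)))
    (by simpa [dist_eq_norm] using norm_fst_le (p - (c, c)))
  simpa [mul_assoc] using hmvt

theorem isBigO_sub_sub_deriv_mul {g : ℝ → ℝ} {g' c : ℝ} (hg : ContDiffAt ℝ 2 g c)
    (hg' : HasDerivAt g g' c) :
    (fun u => g u - g c - g' * (u - c)) =O[𝓝 c] fun u => (u - c) ^ 2 := by
  have hderiv : ContDiffAt ℝ 1 (deriv g) c := hg.derivWithin (by norm_num)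
  have hdiff : ∀ᶠ u in 𝓝 c, HasDerivAt (fun u => g u - g' * (u - c)) (deriv g u - g') u := by
    filter_upwards [hg.eventually (by decide)] with u hu
    simpa using! (hu.differentiableAt two_ne_zero).hasDerivAt.sub
      (((hasDerivAt_id u).sub_const c).const_mul g')
  have hsub : (fun u => deriv g u - g') =O[𝓝 c] fun u => (u - c) ^ 1 := by
    simpa [hg'.deriv] using (hderiv.differentiableAt one_ne_zero).isBigO_sub
  have hpair : Tendsto (fun u => (u, c)) (𝓝 c) (𝓝 (c, c)) :=
    Continuous.tendsto' (by fun_prop) _ _ rfl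
  refine ((isBigO_sub_of_hasDerivAt_isBigO_pow hdiff hsub).comp_tendsto hpair).norm_right.congr
    (fun u => ?_) (fun u => ?_) |>.trans (isBigO_refl _ _).norm_left
  · simp only [Function.comp]; ring
  · simp [sq]

theorem cos_sub_one_add_sq_div_two_isBigO :
    (fun x => cos x - 1 + x ^ 2 / 2) =O[𝓝 0] fun x => x ^ 4 := by
  refine IsBigO.of_bound (5 / 96) ?_
  filter_upwards [Metric.closedBall_mem_nhds (0 : ℝ) one_pos] with x hx
  have hbound := cos_bound (x := x) (by simpa using hx)
  rwa [norm_pow, norm_eq_abs, norm_eq_abs, mul_comm, sub_add]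

end Asymptotics

/-! ### Integrals with a turning point -/

theorem integral_eq_integral_of_eqOn_uIoc_zero {E : Type*} [NormedAddCommGroup E] [NormedSpace ℝ E]
    {f : ℝ → E} {a b c : ℝ} (hb : b ∈ uIcc a c) (hf : ∀ u ∈ uIoc b c, f u = 0) :
    ∫ u in a..c, f u = ∫ u in a..b, f u := by
  rcases mem_uIcc.1 hb with ⟨hab, hbc⟩ | ⟨hcb, hba⟩
  · rw [intervalIntegral.integral_of_le hab, intervalIntegral.integral_of_le (hab.trans hbc)]
    refine MeasureTheory.setIntegral_eq_of_subset_of_forall_sdiff_eq_zero measurableSet_Ioc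
      (Ioc_subset_Ioc_right hbc) fun u hu => hf u ?_
    rw [uIoc_of_le hbc]
    exact ⟨not_le.1 fun hub => hu.2 ⟨hu.1.1, hub⟩, hu.1.2⟩
  · rw [intervalIntegral.integral_of_ge hba, intervalIntegral.integral_of_ge (hcb.trans hba)]
    congr 1
    refine MeasureTheory.setIntegral_eq_of_subset_of_forall_sdiff_eq_zero measurableSet_Ioc
      (Ioc_subset_Ioc_left hcb) fun u hu => hf u ?_
    rw [uIoc_of_ge hcb]
    exact ⟨hu.1.1, not_lt.1 fun hub => hu.2 ⟨hub, hu.1.2⟩⟩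

theorem integral_eq_integral_arcsin {f : ℝ → ℝ} {X x : ℝ} (hX : 0 < X)
    (hf : ∀ u, X ≤ |u| → |u| ≤ |x| → f u = 0) :
    ∫ u in 0..x, f u = ∫ t in 0..arcsin (x / X), f (X * sin t) * (X * cos t) := by
  have hcos : ∀ t ∈ Ioo (min 0 (arcsin (x / X))) (max 0 (arcsin (x / X))), 0 ≤ X * cos t := by
    refine fun t ht => mul_nonneg hX.le (cos_nonneg_of_mem_Icc ⟨?_, ?_⟩)
    · exact (le_min (by linarith [pi_pos]) (neg_pi_div_two_le_arcsin _)).trans ht.1.le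
    · exact ht.2.le.trans (max_le (by positivity) (arcsin_le_pi_div_two _))
  have hsubst := intervalIntegral.integral_comp_mul_deriv_of_deriv_nonneg (g := f)
    (f := fun t => X * sin t) (by fun_prop) (fun t _ => (hasDerivAt_sin t).const_mul X) hcos
  rw [Function.comp_def] at hsubst
  rw [hsubst, sin_zero, mul_zero]
  rcases le_or_gt x (-X) with hx | hx
  · rw [arcsin_of_le_neg_one ((div_le_iff₀ hX).2 (by linarith)), sin_neg, sin_pi_div_two,
      mul_neg_one]
    refine integral_eq_integral_of_eqOn_uIoc_zero
      (mem_uIcc.2 (.inr ⟨hx, by linarith⟩)) fun u hu => ?_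
    rw [uIoc_of_ge hx] at hu
    have hu0 : |u| = -u := abs_of_neg (by linarith [hu.2])
    exact hf u (by linarith [hu.2]) (by linarith [hu.1, neg_le_abs x])
  rcases le_or_gt X x with hx' | hx'
  · rw [arcsin_of_one_le ((one_le_div hX).2 hx'), sin_pi_div_two, mul_one]
    refine integral_eq_integral_of_eqOn_uIoc_zero (mem_uIcc.2 (.inl ⟨hX.le, hx'⟩)) fun u hu => ?_
    rw [uIoc_of_le hx'] at hu
    have hu0 : |u| = u := abs_of_pos (by linarith [hu.1])
    exact hf u (by linarith [hu.1]) (by linarith [hu.2, le_abs_self x])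
  · rw [sin_arcsin ((le_div_iff₀ hX).2 (by linarith)) ((div_le_one hX).2 hx'.le),
      mul_div_cancel₀ _ hX.ne']

theorem abs_integral_sub_integral_le {f g : ℝ → ℝ} {a b c d K : ℝ}
    (hf : ContinuousOn f (Ioo a b)) (hg : Continuous g) (hfg : ∀ t ∈ Ioo a b, |f t - g t| ≤ K)
    (hc : c ∈ Icc a b) (hd : d ∈ Icc a b) :
    |(∫ t in c..d, f t) - ∫ t in c..d, g t| ≤ K * |d - c| := by
  have hcd : uIcc c d ⊆ Icc a b := ordConnected_Icc.uIcc_subset hc hd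
  have hint : MeasureTheory.IntegrableOn (fun t => f t - g t) (Icc a b) := by
    rw [integrableOn_Icc_iff_integrableOn_Ioo]
    exact MeasureTheory.IntegrableOn.of_bound (by simp)
      ((hf.sub hg.continuousOn).aestronglyMeasurable measurableSet_Ioo) K
      (MeasureTheory.ae_restrict_of_forall_mem measurableSet_Ioo hfg)
  have hfgi : IntervalIntegrable (fun t => f t - g t) MeasureTheory.volume c d :=
    (hint.mono_set hcd).intervalIntegrable
  have hgi : IntervalIntegrable g MeasureTheory.volume c d := hg.intervalIntegrable c d
  have hfi : IntervalIntegrable f MeasureTheory.volume c d := by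
    simpa using hfgi.add hgi
  rw [← intervalIntegral.integral_sub hfi hgi, ← norm_eq_abs]
  refine intervalIntegral.norm_integral_le_of_norm_le_const_ae ?_
  filter_upwards [(Set.toFinite {a, b}).countable.ae_notMem MeasureTheory.volume] with t ht htcd
  simp only [mem_insert_iff, mem_singleton_iff, not_or] at ht
  have htab := hcd (uIoc_subset_uIcc htcd)
  exact hfg t ⟨htab.1.lt_of_ne' ht.1, htab.2.lt_of_ne ht.2⟩

/-! ### Uniform first-order expansions -/

/-- The first-order expansion `f = c + d * z + O(z ^ 2)` along `l`, in the small quantity `z`, with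
a bounded coefficient `d`. The coefficient is a function so that the filter can also carry
parameters in which the expansion is uniform. -/
structure HasFirstOrderExpansion {ι : Type*} (l : Filter ι) (z f : ι → ℝ) (c : ℝ) (d : ι → ℝ) :
    Prop where
  coeff_isBigO : d =O[l] fun _ => (1 : ℝ)
  remainder_isBigO : (fun i => f i - c - d i * z i) =O[l] fun i => z i ^ 2

namespace HasFirstOrderExpansion

variable {ι : Type*} {l : Filter ι} {z f f₁ f₂ d d₁ d₂ : ι → ℝ} {c c₁ c₂ : ℝ}

theorem mul_self (hd : d =O[l] fun _ => (1 : ℝ)) :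
    HasFirstOrderExpansion l z (fun i => d i * z i) 0 d :=
  ⟨hd, by simpa using isBigO_zero _ _⟩

theorem sub_isBigO (h : HasFirstOrderExpansion l z f c d) (hz : Tendsto z l (𝓝 0)) :
    (fun i => f i - c) =O[l] z := by
  have hsq : (fun i => z i ^ 2) =O[l] z := by
    simpa [sq] using (hz.isBigO_one ℝ).mul (isBigO_refl z l)
  have hdz : (fun i => d i * z i) =O[l] z := by
    simpa using h.coeff_isBigO.mul (isBigO_refl z l)
  simpa using (h.remainder_isBigO.trans hsq).add hdz

theorem tendsto (h : HasFirstOrderExpansion l z f c d) (hz : Tendsto z l (𝓝 0)) :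
    Tendsto f l (𝓝 c) :=
  tendsto_sub_nhds_zero_iff.1 ((h.sub_isBigO hz).trans_tendsto hz)

theorem congr (h : HasFirstOrderExpansion l z f₁ c₁ d₁) (hf : f₁ =ᶠ[l] f₂) (hc : c₁ = c₂)
    (hd : ∀ i, d₁ i = d₂ i) : HasFirstOrderExpansion l z f₂ c₂ d₂ := by
  obtain rfl : d₁ = d₂ := funext hd
  subst hc
  exact ⟨h.coeff_isBigO, h.remainder_isBigO.congr' (hf.mono fun i hi => by simp only [hi]) .rfl⟩

theorem mul (h₁ : HasFirstOrderExpansion l z f₁ c₁ d₁) (h₂ : HasFirstOrderExpansion l z f₂ c₂ d₂)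
    (hz : Tendsto z l (𝓝 0)) :
    HasFirstOrderExpansion l z (fun i => f₁ i * f₂ i) (c₁ * c₂)
      fun i => c₁ * d₂ i + c₂ * d₁ i := by
  refine ⟨(h₂.coeff_isBigO.const_mul_left c₁).add (h₁.coeff_isBigO.const_mul_left c₂), ?_⟩
  have hprod := (h₁.sub_isBigO hz).mul (h₂.sub_isBigO hz)
  refine ((hprod.congr_right fun i => (sq _).symm).add
    ((h₂.remainder_isBigO.const_mul_left c₁).add
      (h₁.remainder_isBigO.const_mul_left c₂))).congr_left fun i => ?_
  ring

theorem comp {g : ℝ → ℝ} {g' : ℝ} (h : HasFirstOrderExpansion l z f c d)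
    (hz : Tendsto z l (𝓝 0)) (hg : ContDiffAt ℝ 2 g c) (hg' : HasDerivAt g g' c) :
    HasFirstOrderExpansion l z (fun i => g (f i)) (g c) fun i => g' * d i := by
  refine ⟨h.coeff_isBigO.const_mul_left _, ?_⟩
  have htaylor := ((isBigO_sub_sub_deriv_mul hg hg').comp_tendsto (h.tendsto hz)).trans
    ((h.sub_isBigO hz).pow 2)
  refine (htaylor.add (h.remainder_isBigO.const_mul_left g')).congr_left fun i => ?_
  simp only [Function.comp]
  ring

end HasFirstOrderExpansion

/-! ### The swept angle -/

/-- The profile `ψ` of a surface of revolution `m(r) = ψ((a - r)²)` around the equator `r = a`, with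
the Taylor polynomial `b - α w + β w²` of `ψ` at `0`. -/
structure IsEquatorProfile (ψ : ℝ → ℝ) (b α β : ℝ) : Prop where
  contDiffAt : ContDiffAt ℝ 3 ψ 0
  apply_zero : ψ 0 = b
  deriv_zero : deriv ψ 0 = -α
  deriv_deriv_zero : deriv (deriv ψ) 0 = 2 * β
  radius_pos : 0 < b
  slope_pos : 0 < α

/-- The angle swept by the geodesic with Clairaut constant `ν` between the equator and the parallel
at signed distance `x` below it. The integrand is `0` by convention where `|ψ (u ^ 2)| ≤ ν`, that
is, beyond the turning point. -/
noncomputable def sweptAngle (ψ : ℝ → ℝ) (ν x : ℝ) : ℝ :=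
  ∫ u in 0..x, ν / (ψ (u ^ 2) * √(ψ (u ^ 2) ^ 2 - ν ^ 2))

/-- The integrand of `sweptAngle ψ (ψ (X ^ 2))` after the substitution `u = X * sin t`, where `X`
is the distance of the turning point from the equator. -/
noncomputable def sweptAngleDensity (ψ : ℝ → ℝ) (X t : ℝ) : ℝ :=
  ψ (X ^ 2) / (ψ ((X * sin t) ^ 2) * √(ψ ((X * sin t) ^ 2) ^ 2 - ψ (X ^ 2) ^ 2)) * (X * cos t)

/-- The relative coefficient of `X ^ 2` in the expansion of `sweptAngleDensity ψ X t`. -/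
noncomputable def densityCorrection (b α β t : ℝ) : ℝ :=
  (α ^ 2 + 2 * b * β) / (4 * α * b) * (1 + sin t ^ 2) - α / b * cos t ^ 2

/-- The mean of `densityCorrection b α β` over `[0, π / 2]`, that is, the relative coefficient of
`X ^ 2` in the angle swept down to the turning point. -/
noncomputable def meanCorrection (b α β : ℝ) : ℝ :=
  (6 * b * β - α ^ 2) / (8 * α * b)

theorem continuous_densityCorrection (b α β : ℝ) : Continuous (densityCorrection b α β) := by
  unfold densityCorrection
  fun_prop

theorem integral_densityCorrection_pi_div_two {b α β : ℝ} (hb : b ≠ 0) (hα : α ≠ 0) :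
    ∫ t in 0..π / 2, densityCorrection b α β t = π / 2 * meanCorrection b α β := by
  have hint : ∀ f : ℝ → ℝ, Continuous f → IntervalIntegrable f MeasureTheory.volume 0 (π / 2) :=
    fun f hf => hf.intervalIntegrable _ _
  simp only [densityCorrection, meanCorrection]
  rw [intervalIntegral.integral_sub (hint _ (by fun_prop)) (hint _ (by fun_prop)),
    intervalIntegral.integral_const_mul, intervalIntegral.integral_const_mul,
    intervalIntegral.integral_add (hint _ (by fun_prop)) (hint _ (by fun_prop)),
    integral_sin_sq, integral_cos_sq, intervalIntegral.integral_const]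
  simp only [sin_zero, cos_zero, sin_pi_div_two, cos_pi_div_two, smul_eq_mul]
  field_simp
  ring

theorem isBigO_integral_densityCorrection (b α β : ℝ) :
    (fun τ => ∫ t in 0..τ, densityCorrection b α β t) =O[⊤] fun τ => τ := by
  refine IsBigO.of_bound (|(α ^ 2 + 2 * b * β) / (4 * α * b)| * 2 + |α / b|)
    (Eventually.of_forall fun τ => ?_)
  suffices hbound : ∀ t, ‖densityCorrection b α β t‖ ≤
      |(α ^ 2 + 2 * b * β) / (4 * α * b)| * 2 + |α / b| by
    simpa using intervalIntegral.norm_integral_le_of_norm_le_const (a := 0) (b := τ)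
      fun t _ => hbound t
  intro t
  refine (norm_sub_le _ _).trans (add_le_add ?_ ?_)
  · rw [norm_mul, norm_eq_abs, norm_of_nonneg (by positivity)]
    gcongr
    linarith [sin_sq_le_one t]
  · rw [norm_mul, norm_eq_abs, norm_of_nonneg (by positivity)]
    exact mul_le_of_le_one_right (abs_nonneg _) (cos_sq_le_one t)

/-- The regime `X → 0⁺`, uniformly in `t ∈ (-π/2, π/2)`, for pairs `(X, t)`. -/
def shrinkingTurningPoint : Filter (ℝ × ℝ) :=
  𝓝[>] 0 ×ˢ 𝓟 (Ioo (-(π / 2)) (π / 2))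

theorem eventually_shrinkingTurningPoint :
    ∀ᶠ p in shrinkingTurningPoint, 0 < p.1 ∧ 0 < cos p.2 := by
  have hX : ∀ᶠ X : ℝ in 𝓝[>] 0, 0 < X := self_mem_nhdsWithin
  exact (hX.prod_mk (mem_principal_self (Ioo (-(π / 2)) (π / 2)))).mono
    fun _ hp => ⟨hp.1, cos_pos_of_mem_Ioo hp.2⟩

theorem tendsto_fst_sq_shrinkingTurningPoint :
    Tendsto (fun p : ℝ × ℝ => p.1 ^ 2) shrinkingTurningPoint (𝓝 0) :=
  tendsto_sq_nhdsGT_zero.comp tendsto_fst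

theorem isBigO_sin_sq_one (l : Filter (ℝ × ℝ)) :
    (fun p : ℝ × ℝ => sin p.2 ^ 2) =O[l] fun _ => (1 : ℝ) :=
  IsBigO.of_bound 1 (Eventually.of_forall fun p => by simpa using sin_sq_le_one p.2)

namespace IsEquatorProfile

variable {ψ : ℝ → ℝ} {b α β : ℝ}

theorem hasDerivAt_zero (h : IsEquatorProfile ψ b α β) : HasDerivAt ψ (-α) 0 :=
  h.deriv_zero ▸ (h.contDiffAt.differentiableAt three_ne_zero).hasDerivAt

theorem contDiffAt_deriv (h : IsEquatorProfile ψ b α β) : ContDiffAt ℝ 2 (deriv ψ) 0 :=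
  h.contDiffAt.derivWithin (by norm_num)

theorem exists_strictAnti_radius (h : IsEquatorProfile ψ b α β) :
    ∃ ρ > 0, (∀ u, |u| < ρ → 0 < ψ (u ^ 2) ∧ ContinuousAt ψ (u ^ 2)) ∧
      ∀ u v, |u| < |v| → |v| < ρ → ψ (v ^ 2) < ψ (u ^ 2) := by
  have hneg : ∀ᶠ w in 𝓝 0, deriv ψ w < 0 :=
    h.contDiffAt_deriv.continuousAt.eventually
      (gt_mem_nhds (by simpa [h.deriv_zero] using h.slope_pos))
  have hpos : ∀ᶠ w in 𝓝 0, 0 < ψ w :=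
    h.contDiffAt.continuousAt.eventually (lt_mem_nhds (by simpa [h.apply_zero] using h.radius_pos))
  have hcont : ∀ᶠ w in 𝓝 0, ContinuousAt ψ w :=
    (h.contDiffAt.eventually (by decide)).mono fun _ hw => hw.continuousAt
  obtain ⟨ε, hε, hball⟩ := Metric.eventually_nhds_iff.1 (hneg.and (hpos.and hcont))
  have hIco : ∀ w ∈ Ico 0 ε, deriv ψ w < 0 ∧ 0 < ψ w ∧ ContinuousAt ψ w := fun w hw =>
    hball (by simpa [abs_of_nonneg hw.1] using hw.2)
  have hanti : StrictAntiOn ψ (Ico 0 ε) :=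
    strictAntiOn_of_deriv_neg (convex_Ico _ _) (fun w hw => (hIco w hw).2.2.continuousWithinAt)
      fun w hw => (hIco w (interior_subset hw)).1
  have hsq : ∀ u, |u| < √ε → u ^ 2 ∈ Ico 0 ε := fun u hu =>
    ⟨sq_nonneg u, sq_abs u ▸ (lt_sqrt (abs_nonneg u)).1 hu⟩
  exact ⟨√ε, sqrt_pos.2 hε, fun u hu => (hIco _ (hsq u hu)).2, fun u v huv hv =>
    hanti (hsq u (huv.trans hv)) (hsq v hv) (sq_lt_sq.2 huv)⟩

/- The mean value theorem, unlike Taylor's formula at `0`, gives a remainder with the factor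
`p.1 - p.2`, so that it can be divided by `(X * sin t) ^ 2 - X ^ 2`. -/
theorem isBigO_sq_sub_sq (h : IsEquatorProfile ψ b α β) :
    (fun p : ℝ × ℝ => ψ p.1 ^ 2 - ψ p.2 ^ 2 + 2 * α * b * (p.1 - p.2) -
        (α ^ 2 + 2 * b * β) * (p.1 ^ 2 - p.2 ^ 2)) =O[𝓝 0]
      fun p => ‖p‖ ^ 2 * (p.1 - p.2) := by
  have hid : HasFirstOrderExpansion (𝓝 0) (fun w : ℝ => w) (fun w => w) 0 fun _ => 1 := by
    simpa using HasFirstOrderExpansion.mul_self (z := fun w : ℝ => w) (isBigO_refl _ (𝓝 0))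
  have hψ := hid.comp tendsto_id (h.contDiffAt.of_le (by norm_num)) h.hasDerivAt_zero
  have hψ' := hid.comp tendsto_id h.contDiffAt_deriv
    (h.deriv_deriv_zero ▸ (h.contDiffAt_deriv.differentiableAt two_ne_zero).hasDerivAt)
  have hprod := (hψ.mul hψ' tendsto_id).remainder_isBigO.const_mul_left 2
  have hderiv : ∀ᶠ w in 𝓝 0, HasDerivAt
      (fun w => ψ w ^ 2 + 2 * α * b * w - (α ^ 2 + 2 * b * β) * w ^ 2)
      (2 * (ψ w * deriv ψ w - b * -α - (b * (2 * β) + -α * -α) * w)) w := by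
    filter_upwards [h.contDiffAt.eventually (by decide)] with w hw
    have hψw := (hw.differentiableAt three_ne_zero).hasDerivAt
    refine (((hψw.pow 2).add ((hasDerivAt_id w).const_mul (2 * α * b))).sub
      (((hasDerivAt_id w).pow 2).const_mul (α ^ 2 + 2 * b * β))).congr_deriv ?_
    simp only [id_eq, Nat.cast_ofNat]
    ring
  refine (isBigO_sub_of_hasDerivAt_isBigO_pow (k := 2) hderiv ?_).congr (fun p => ?_) fun p => ?_
  · simpa [h.apply_zero, h.deriv_zero] using hprod
  · ring
  · simp only [Prod.mk_zero_zero, sub_zero]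

theorem hasFirstOrderExpansion_sq_sub_sq_div (h : IsEquatorProfile ψ b α β) :
    HasFirstOrderExpansion shrinkingTurningPoint (fun p => p.1 ^ 2)
      (fun p => (ψ ((p.1 * sin p.2) ^ 2) ^ 2 - ψ (p.1 ^ 2) ^ 2) / (p.1 * cos p.2) ^ 2)
      (2 * α * b) fun p => -(α ^ 2 + 2 * b * β) * (1 + sin p.2 ^ 2) := by
  refine ⟨((isBigO_refl _ _).add (isBigO_sin_sq_one _)).const_mul_left _, ?_⟩
  have hle : ∀ p : ℝ × ℝ, (p.1 * sin p.2) ^ 2 ≤ p.1 ^ 2 := fun p => by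
    rw [mul_pow]
    exact mul_le_of_le_one_right (sq_nonneg _) (sin_sq_le_one _)
  have hpair : Tendsto (fun p : ℝ × ℝ => ((p.1 * sin p.2) ^ 2, p.1 ^ 2)) shrinkingTurningPoint
      (𝓝 0) :=
    (squeeze_zero (fun _ => sq_nonneg _) hle tendsto_fst_sq_shrinkingTurningPoint).prodMk_nhds
      tendsto_fst_sq_shrinkingTurningPoint
  have hquot := (h.isBigO_sq_sub_sq.comp_tendsto hpair).mul
    (isBigO_refl (fun p : ℝ × ℝ => ((p.1 * cos p.2) ^ 2)⁻¹) _)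
  refine hquot.neg_right.congr' ?_ ?_ <;>
    filter_upwards [eventually_shrinkingTurningPoint] with p ⟨hX, hcos⟩
  · simp only [Function.comp, mul_pow _ (cos _)]
    field_simp
    rw [cos_sq']
    ring
  · have hnorm : ‖((p.1 * sin p.2) ^ 2, p.1 ^ 2)‖ = p.1 ^ 2 := by
      rw [Prod.norm_mk, norm_of_nonneg (sq_nonneg _), norm_of_nonneg (sq_nonneg _),
        max_eq_right (hle p)]
    simp only [Function.comp, hnorm, mul_pow _ (cos _)]
    field_simp
    rw [cos_sq']
    ring

theorem hasFirstOrderExpansion_sweptAngleDensity (h : IsEquatorProfile ψ b α β) :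
    HasFirstOrderExpansion shrinkingTurningPoint (fun p => p.1 ^ 2)
      (fun p => sweptAngleDensity ψ p.1 p.2) (1 / √(2 * α * b))
      fun p => 1 / √(2 * α * b) * densityCorrection b α β p.2 := by
  have hα := h.slope_pos
  have hb := h.radius_pos
  have hz := tendsto_fst_sq_shrinkingTurningPoint
  have hψ : ContDiffAt ℝ 2 ψ 0 := h.contDiffAt.of_le (by norm_num)
  have hX := (HasFirstOrderExpansion.mul_self (isBigO_refl _ _)).comp hz hψ h.hasDerivAt_zero
  have hu := (HasFirstOrderExpansion.mul_self (isBigO_sin_sq_one _)).comp hz hψ h.hasDerivAt_zero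
  have hinv := hu.comp hz (g := fun u => u⁻¹) (contDiffAt_inv ℝ (h.apply_zero ▸ hb.ne'))
    (hasDerivAt_inv (h.apply_zero ▸ hb.ne'))
  have hs : 0 < √(2 * α * b) := by positivity
  have hroot := h.hasFirstOrderExpansion_sq_sub_sq_div.comp hz (g := fun q => (√q)⁻¹)
    ((contDiffAt_sqrt (by positivity)).inv hs.ne')
    ((hasDerivAt_sqrt (by positivity)).inv hs.ne')
  refine ((hX.mul hinv hz).mul hroot hz).congr ?_ ?_ fun p => ?_
  · filter_upwards [eventually_shrinkingTurningPoint] with p hp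
    have hpos : 0 < p.1 * cos p.2 := mul_pos hp.1 hp.2
    rw [sqrt_div' _ (by positivity), sqrt_sq hpos.le, one_mul, sweptAngleDensity, mul_pow,
      mul_comm (p.1 ^ 2)]
    simp only [div_eq_mul_inv, mul_inv, inv_inv]
    ring
  · rw [h.apply_zero]
    field_simp
  · have hsq : √(2 * α * b) ^ 2 = 2 * α * b := sq_sqrt (by positivity)
    simp only [h.apply_zero, densityCorrection, hsq, cos_sq']
    field_simp
    ring

theorem eventually_sweptAngle_eq_integral (h : IsEquatorProfile ψ b α β) :
    ∀ᶠ p : ℝ × ℝ in 𝓝[>] 0 ×ˢ 𝓝 0, sweptAngle ψ (ψ (p.1 ^ 2)) p.2 =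
      ∫ t in 0..arcsin (p.2 / p.1), sweptAngleDensity ψ p.1 t := by
  obtain ⟨ρ, hρ, hpos, hanti⟩ := h.exists_strictAnti_radius
  have hx : ∀ᶠ x : ℝ in 𝓝 0, |x| < ρ := by
    simpa using eventually_norm_sub_lt (0 : ℝ) hρ
  have hX : ∀ᶠ X : ℝ in 𝓝[>] 0, 0 < X := self_mem_nhdsWithin
  filter_upwards [hX.prod_mk hx] with p ⟨hX, hx⟩
  refine integral_eq_integral_arcsin hX fun u hXu hux => ?_
  have hle : ψ (u ^ 2) ≤ ψ (p.1 ^ 2) := by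
    rcases hXu.eq_or_lt with hXu | hXu
    · rw [hXu, sq_abs]
    · exact (hanti _ _ (by rwa [abs_of_pos hX]) (hux.trans_lt hx)).le
  have hsq : ψ (u ^ 2) ^ 2 ≤ ψ (p.1 ^ 2) ^ 2 :=
    pow_le_pow_left₀ (hpos u (hux.trans_lt hx)).1.le hle 2
  rw [sqrt_eq_zero_of_nonpos (sub_nonpos.2 hsq), mul_zero, div_zero]

theorem eventually_continuousOn_sweptAngleDensity (h : IsEquatorProfile ψ b α β) :
    ∀ᶠ X in 𝓝[>] 0, ContinuousOn (sweptAngleDensity ψ X) (Ioo (-(π / 2)) (π / 2)) := by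
  obtain ⟨ρ, hρ, hreg, hanti⟩ := h.exists_strictAnti_radius
  filter_upwards [Ioo_mem_nhdsGT hρ] with X ⟨hX, hXρ⟩ t ht
  have hXabs : |X| < ρ := by rwa [abs_of_pos hX]
  have hlt : |X * sin t| < |X| := by
    rw [abs_mul]
    refine mul_lt_of_lt_one_right (abs_pos.2 hX.ne') ((sq_lt_one_iff_abs_lt_one _).1 ?_)
    linarith [sin_sq_add_cos_sq t, pow_pos (cos_pos_of_mem_Ioo ht) 2]
  obtain ⟨hpos, hcont⟩ := hreg _ (hlt.trans hXabs)
  have hψ : ContinuousAt (fun t => ψ ((X * sin t) ^ 2)) t :=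
    ContinuousAt.comp (f := fun t => (X * sin t) ^ 2) hcont (by fun_prop)
  have hroot : 0 < ψ ((X * sin t) ^ 2) ^ 2 - ψ (X ^ 2) ^ 2 :=
    sub_pos.2 (pow_lt_pow_left₀ (hanti _ _ hlt hXabs) (hreg X hXabs).1.le two_ne_zero)
  exact ((continuousAt_const.div (hψ.mul ((hψ.pow 2).sub continuousAt_const).sqrt)
    (mul_ne_zero hpos.ne' (sqrt_ne_zero'.2 hroot))).mul (by fun_prop)).continuousWithinAt

theorem sweptAngle_sub_isBigO (h : IsEquatorProfile ψ b α β) :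
    (fun p : ℝ × ℝ => sweptAngle ψ (ψ (p.1 ^ 2)) p.2 - 1 / √(2 * α * b) *
        (arcsin (p.2 / p.1) +
          p.1 ^ 2 * ∫ t in 0..arcsin (p.2 / p.1), densityCorrection b α β t))
      =O[𝓝[>] 0 ×ˢ 𝓝 0] fun p => p.1 ^ 4 * arcsin (p.2 / p.1) := by
  obtain ⟨C, hC⟩ := h.hasFirstOrderExpansion_sweptAngleDensity.remainder_isBigO.bound
  have hbound := (eventually_prod_principal_iff.1 hC).and
    h.eventually_continuousOn_sweptAngleDensity
  have hcorr := continuous_densityCorrection b α β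
  refine IsBigO.of_bound C ?_
  filter_upwards [h.eventually_sweptAngle_eq_integral, hbound.prod_inl (𝓝 0)] with p heq ⟨hp, hcont⟩
  set τ := arcsin (p.2 / p.1)
  have hexpansion : ∫ t in 0..τ, (1 / √(2 * α * b) +
      1 / √(2 * α * b) * densityCorrection b α β t * p.1 ^ 2) =
      1 / √(2 * α * b) * (τ + p.1 ^ 2 * ∫ t in 0..τ, densityCorrection b α β t) := by
    rw [intervalIntegral.integral_add (by simp) (Continuous.intervalIntegrable (by fun_prop) _ _),
      intervalIntegral.integral_mul_const, intervalIntegral.integral_const_mul]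
    simp only [intervalIntegral.integral_const, smul_eq_mul]
    ring
  rw [heq, ← hexpansion, norm_mul, norm_eq_abs, ← mul_assoc]
  have hzero : (0 : ℝ) ∈ Icc (-(π / 2)) (π / 2) := ⟨by linarith [pi_pos], by positivity⟩
  have hle := abs_integral_sub_integral_le (g := fun t => 1 / √(2 * α * b) +
      1 / √(2 * α * b) * densityCorrection b α β t * p.1 ^ 2) hcont (by fun_prop)
    (fun t ht => by simpa only [sub_sub, norm_eq_abs] using hp t ht) hzero
    (arcsin_mem_Icc (p.2 / p.1))
  simpa [← pow_mul] using hle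

theorem sweptAngle_turningPoint_sub_isBigO (h : IsEquatorProfile ψ b α β) :
    (fun X => sweptAngle ψ (ψ (X ^ 2)) X - 1 / √(2 * α * b) *
        (π / 2 * (1 + meanCorrection b α β * X ^ 2)))
      =O[𝓝[>] 0] fun X => X ^ 4 := by
  have hdiag : Tendsto (fun X : ℝ => (X, X)) (𝓝[>] 0) (𝓝[>] 0 ×ˢ 𝓝 0) :=
    tendsto_id.prodMk (tendsto_id.mono_right nhdsWithin_le_nhds)
  refine ((h.sweptAngle_sub_isBigO.comp_tendsto hdiag).congr' ?_ ?_).trans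
    (isBigO_const_mul_self (π / 2) _ _) <;>
    filter_upwards [self_mem_nhdsWithin] with X (hX : 0 < X)
  · simp only [Function.comp, div_self hX.ne', arcsin_one,
      integral_densityCorrection_pi_div_two h.radius_pos.ne' h.slope_pos.ne']
    ring
  · simp only [Function.comp, div_self hX.ne', arcsin_one, mul_comm]

section Intersection

variable {ι : Type*} {l : Filter ι} {X x : ι → ℝ}

theorem arcsin_div_sub_isBigO (h : IsEquatorProfile ψ b α β) (hX : Tendsto X l (𝓝[>] 0))
    (hx : Tendsto x l (𝓝 0))
    (hcut : ∀ᶠ i in l, sweptAngle ψ (ψ (X i ^ 2)) (x i) =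
      2 * sweptAngle ψ (ψ (X i ^ 2)) (X i) - π / √(2 * α * b)) :
    (fun i => arcsin (x i / X i) - π * meanCorrection b α β * X i ^ 2)
      =O[l] fun i => X i ^ 4 := by
  set τ := fun i => arcsin (x i / X i)
  set J := fun i => ∫ t in 0..τ i, densityCorrection b α β t
  have hs : √(2 * α * b) ≠ 0 := by
    have := h.slope_pos
    have := h.radius_pos
    positivity
  have hτ : τ =O[l] fun _ => (1 : ℝ) := IsBigO.of_bound (π / 2) <| Eventually.of_forall fun i => by
    simpa using abs_le.2 (arcsin_mem_Icc (x i / X i))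
  have hJ : J =O[l] τ := (isBigO_integral_densityCorrection b α β).comp_tendsto tendsto_top
  have hX2 : (fun i => X i ^ 2) =O[l] fun _ => (1 : ℝ) :=
    (tendsto_sq_nhdsGT_zero.comp hX).isBigO_one ℝ
  have hangle : (fun i => sweptAngle ψ (ψ (X i ^ 2)) (x i) - 1 / √(2 * α * b) *
      (τ i + X i ^ 2 * J i)) =O[l] fun i => X i ^ 4 :=
    (h.sweptAngle_sub_isBigO.comp_tendsto (hX.prodMk hx)).trans
      (((isBigO_refl (fun i => X i ^ 4) l).mul hτ).congr_right fun i => mul_one _)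
  have hperiod := h.sweptAngle_turningPoint_sub_isBigO.comp_tendsto hX
  have hsolve : (fun i => τ i - π * meanCorrection b α β * X i ^ 2 + X i ^ 2 * J i)
      =O[l] fun i => (X i ^ 2) ^ 2 := by
    refine (((hperiod.const_mul_left 2).sub hangle).const_mul_left √(2 * α * b)).congr'
      ?_ (.of_forall fun i => pow_mul (X i) 2 2)
    filter_upwards [hcut] with i hi
    simp only [Function.comp, hi]
    field_simp
    ring
  exact (isBigO_sub_const_mul_of_add_mul hτ hX2 hJ hsolve).congr_right
    fun i => (pow_mul (X i) 2 2).symm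

theorem intersection_sub_isBigO (h : IsEquatorProfile ψ b α β) (hX : Tendsto X l (𝓝[>] 0))
    (hx : Tendsto x l (𝓝 0))
    (hcut : ∀ᶠ i in l, sweptAngle ψ (ψ (X i ^ 2)) (x i) =
      2 * sweptAngle ψ (ψ (X i ^ 2)) (X i) - π / √(2 * α * b)) :
    (fun i => x i - π * meanCorrection b α β * X i ^ 3) =O[l] fun i => X i ^ 5 := by
  set τ := fun i => arcsin (x i / X i)
  have hτ : HasFirstOrderExpansion l (fun i => X i ^ 2) τ 0 fun _ => π * meanCorrection b α β :=
    ⟨isBigO_const_const _ one_ne_zero _, by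
      simpa [← pow_mul] using h.arcsin_div_sub_isBigO hX hx hcut⟩
  have hX2 : Tendsto (fun i => X i ^ 2) l (𝓝 0) := tendsto_sq_nhdsGT_zero.comp hX
  have hsin := hτ.comp hX2 contDiff_sin.contDiffAt (hasDerivAt_sin 0)
  have hsmall : ∀ᶠ i in l, τ i ∈ Ioo (-(π / 2)) (π / 2) :=
    hτ.tendsto hX2 (Ioo_mem_nhds (by linarith [pi_pos]) (by positivity))
  have hxX : ∀ᶠ i in l, x i = X i * sin (τ i) := by
    filter_upwards [hsmall, hX self_mem_nhdsWithin] with i ⟨hlo, hhi⟩ hXi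
    rw [sin_arcsin (neg_pi_div_two_lt_arcsin.1 hlo).le (arcsin_lt_pi_div_two.1 hhi).le,
      mul_div_cancel₀ _ (ne_of_gt hXi)]
  refine ((isBigO_refl X l).mul hsin.remainder_isBigO).congr' ?_ (.of_forall fun i => by ring)
  filter_upwards [hxX] with i hi
  rw [hi, sin_zero, cos_zero]
  ring

end Intersection

/-! ### The initial angle -/

theorem eventually_cos_arccos (h : IsEquatorProfile ψ b α β) :
    ∀ᶠ X in 𝓝[>] 0, cos (arccos (ψ (X ^ 2) / b)) = ψ (X ^ 2) / b := by
  obtain ⟨ρ, hρ, hreg, hanti⟩ := h.exists_strictAnti_radius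
  filter_upwards [Ioo_mem_nhdsGT hρ] with X ⟨hX, hXρ⟩
  have hXabs : |X| < ρ := by rwa [abs_of_pos hX]
  have hlt : ψ (X ^ 2) < b := by
    simpa [h.apply_zero] using hanti 0 X (by simpa using hX.ne') hXabs
  have hpos := div_pos (hreg X hXabs).1 h.radius_pos
  exact cos_arccos (by linarith) ((div_le_one h.radius_pos).2 hlt.le)

theorem tendsto_arccos_zero (h : IsEquatorProfile ψ b α β) :
    Tendsto (fun X => arccos (ψ (X ^ 2) / b)) (𝓝[>] 0) (𝓝 0) := by
  have hψ : ContinuousAt (fun X : ℝ => ψ (X ^ 2)) 0 :=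
    ContinuousAt.comp (f := fun X : ℝ => X ^ 2) (by simpa using h.contDiffAt.continuousAt)
      (by fun_prop)
  have harccos : Tendsto (fun X => arccos (ψ (X ^ 2) / b)) (𝓝 0) (𝓝 (arccos (ψ (0 ^ 2) / b))) :=
    (continuous_arccos.continuousAt).comp (hψ.div_const b)
  rw [zero_pow two_ne_zero, h.apply_zero, div_self h.radius_pos.ne', arccos_one] at harccos
  exact harccos.mono_left nhdsWithin_le_nhds

theorem apply_sq_sub_isBigO (h : IsEquatorProfile ψ b α β) :
    (fun X => ψ (X ^ 2) - b + α * X ^ 2) =O[𝓝[>] 0] fun X => X ^ 2 * X ^ 2 := by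
  refine ((isBigO_sub_sub_deriv_mul (h.contDiffAt.of_le (by norm_num))
    h.hasDerivAt_zero).comp_tendsto tendsto_sq_nhdsGT_zero).congr (fun X => ?_) fun X => ?_ <;>
    simp only [Function.comp, h.apply_zero] <;> ring

theorem isBigO_arccos (h : IsEquatorProfile ψ b α β) :
    (fun X : ℝ => X) =O[𝓝[>] 0] fun X => arccos (ψ (X ^ 2) / b) := by
  have hdrop : (fun X : ℝ => X ^ 2) =O[𝓝[>] 0] fun X => ψ (X ^ 2) - b :=
    isBigO_of_sub_const_mul_isBigO_mul (neg_ne_zero.2 h.slope_pos.ne') tendsto_sq_nhdsGT_zero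
      (h.apply_sq_sub_isBigO.congr_left fun X => by ring)
  have hcos : (fun X => cos (arccos (ψ (X ^ 2) / b)) - 1) =O[𝓝[>] 0]
      fun X => arccos (ψ (X ^ 2) / b) ^ 2 := by
    simpa using! (isBigO_sub_sub_deriv_mul contDiff_cos.contDiffAt
      (hasDerivAt_cos 0)).comp_tendsto h.tendsto_arccos_zero
  refine IsBigO.of_pow two_ne_zero (hdrop.trans ((hcos.const_mul_left b).congr' ?_ .rfl))
  filter_upwards [h.eventually_cos_arccos] with X hX
  rw [hX, mul_sub_one, mul_div_cancel₀ _ h.radius_pos.ne']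

theorem sq_sub_arccos_sq_isBigO (h : IsEquatorProfile ψ b α β) :
    (fun X => X ^ 2 - (√(b / (2 * α)) * arccos (ψ (X ^ 2) / b)) ^ 2) =O[𝓝[>] 0]
      fun X => arccos (ψ (X ^ 2) / b) ^ 4 := by
  have hα := h.slope_pos
  have hb := h.radius_pos
  have hdrop := h.apply_sq_sub_isBigO.trans ((h.isBigO_arccos.pow 2).mul
    (h.isBigO_arccos.pow 2))
  have hcos := cos_sub_one_add_sq_div_two_isBigO.comp_tendsto h.tendsto_arccos_zero
  refine ((hdrop.const_mul_left (1 / α)).sub ((hcos.const_mul_left (b / α)).congr_right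
    fun X => pow_add _ 2 2)).congr' ?_ (.of_forall fun X => (pow_add _ 2 2).symm)
  filter_upwards [h.eventually_cos_arccos] with X hX
  rw [mul_pow, sq_sqrt (by positivity)]
  simp only [Function.comp, hX]
  field_simp
  ring

theorem pow_three_sub_arccos_pow_three_isBigO (h : IsEquatorProfile ψ b α β) :
    (fun X => X ^ 3 - (√(b / (2 * α)) * arccos (ψ (X ^ 2) / b)) ^ 3) =O[𝓝[>] 0]
      fun X => arccos (ψ (X ^ 2) / b) ^ 5 := by
  have hX : ∀ᶠ X : ℝ in 𝓝[>] 0, 0 ≤ X := eventually_mem_nhdsWithin.mono fun _ hX => le_of_lt hX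
  have hη : ∀ᶠ X : ℝ in 𝓝[>] 0, 0 ≤ √(b / (2 * α)) * arccos (ψ (X ^ 2) / b) :=
    .of_forall fun X => mul_nonneg (sqrt_nonneg _) (arccos_nonneg _)
  have hsum := h.isBigO_arccos.add
    (isBigO_const_mul_self √(b / (2 * α)) (fun X => arccos (ψ (X ^ 2) / b)) (𝓝[>] 0))
  exact (isBigO_pow_three_sub_pow_three hX hη).trans
    ((h.sq_sub_arccos_sq_isBigO.mul hsum).congr_right fun X => by ring)

end IsEquatorProfile

theorem expansion_coeff_eq {b α : ℝ} (hb : 0 < b) (hα : 0 < α) (β : ℝ) :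
    (6 * b * β - α ^ 2) * √b * π / (16 * √2 * α ^ ((5 : ℝ) / 2)) =
      π * meanCorrection b α β * √(b / (2 * α)) ^ 3 := by
  have hpow : α ^ ((5 : ℝ) / 2) = α ^ 2 * √α := by
    rw [sqrt_eq_rpow, ← rpow_natCast, ← rpow_add hα]
    norm_num
  have hsqrt : √(b / (2 * α)) ^ 3 = b / (2 * α) * (√b / (√2 * √α)) := by
    rw [pow_succ, sq_sqrt (by positivity), sqrt_div hb.le, sqrt_mul zero_le_two]
  rw [hpow, hsqrt, meanCorrection]
  field_simp
  ring

theorem integral_eq_sweptAngle {ψ m : ℝ → ℝ} {a : ℝ} (hm : ∀ r, m r = ψ ((a - r) ^ 2))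
    (ν r : ℝ) : ∫ s in r..a, ν / (m s * √(m s ^ 2 - ν ^ 2)) = sweptAngle ψ ν (a - r) := by
  simp only [hm, sweptAngle]
  rw [intervalIntegral.integral_comp_sub_left
    (fun u => ν / (ψ (u ^ 2) * √(ψ (u ^ 2) ^ 2 - ν ^ 2))) a, sub_self]

theorem meridian_intersection_expansion_general {ψ m R r : ℝ → ℝ} {a b α β : ℝ}
    (h : IsEquatorProfile ψ b α β) (hm : ∀ r, m r = ψ ((a - r) ^ 2))
    (hR_lt : ∀ᶠ ν in 𝓝[<] b, R ν < a) (hR_eq : ∀ᶠ ν in 𝓝[<] b, m (R ν) = ν)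
    (hR : Tendsto R (𝓝[<] b) (𝓝 a))
    (hr_eq : ∀ᶠ ν in 𝓝[<] b, ∫ s in r ν..a, ν / (m s * √(m s ^ 2 - ν ^ 2)) =
      2 * (∫ s in R ν..a, ν / (m s * √(m s ^ 2 - ν ^ 2))) - π / √(2 * α * b))
    (hr : Tendsto r (𝓝[<] b) (𝓝 a)) :
    (fun ν => r ν - (a - (6 * b * β - α ^ 2) * √b * π / (16 * √2 * α ^ ((5 : ℝ) / 2)) *
        arccos (ν / b) ^ 3)) =O[𝓝[<] b] fun ν => arccos (ν / b) ^ 5 := by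
  have hX : Tendsto (fun ν => a - R ν) (𝓝[<] b) (𝓝[>] 0) :=
    tendsto_nhdsWithin_iff.2
      ⟨by simpa using hR.const_sub a, hR_lt.mono fun ν => sub_pos.2⟩
  have hx : Tendsto (fun ν => a - r ν) (𝓝[<] b) (𝓝 0) := by
    simpa using hr.const_sub a
  have hν : ∀ᶠ ν in 𝓝[<] b, ψ ((a - R ν) ^ 2) = ν := hR_eq.mono fun ν hν => hm _ ▸ hν
  have hcut : ∀ᶠ ν in 𝓝[<] b, sweptAngle ψ (ψ ((a - R ν) ^ 2)) (a - r ν) =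
      2 * sweptAngle ψ (ψ ((a - R ν) ^ 2)) (a - R ν) - π / √(2 * α * b) := by
    filter_upwards [hν, hr_eq] with ν hν hr_eq
    rwa [hν, ← integral_eq_sweptAngle hm, ← integral_eq_sweptAngle hm]
  have hR_arccos := (h.isBigO_arccos.comp_tendsto hX).pow 5
  have hcube := (h.pow_three_sub_arccos_pow_three_isBigO.comp_tendsto hX).const_mul_left
    (π * meanCorrection b α β)
  refine (((h.intersection_sub_isBigO hX hx hcut).trans hR_arccos).add hcube).neg_left.congr'
    ?_ ?_ <;> filter_upwards [hν] with ν hν <;> simp only [Function.comp, hν]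
  rw [expansion_coeff_eq h.radius_pos h.slope_pos]
  ring

/-- First intersection of the geodesic with Clairaut constant `ν` with the meridian
`θ = θ_cut`: as the initial angle `η = arccos(ν/b) → 0⁺`,
`r_ν = a − ((6bβ − α²)√b π/(16√2 α^{5/2})) η³ + O(η⁵)`. -/
theorem meridian_intersection_expansion
    (a b α : ℝ) (ha : 0 < a) (hb : 0 < b) (hα : 0 < α) (β : ℝ)
    (ψ : ℝ → ℝ) (δ : ℝ) (hδ : 0 < δ) (hψ : ContDiffOn ℝ (⊤ : ℕ∞) ψ (Ioo (-δ) δ))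
    (hψ0 : ψ 0 = b) (hψ1 : deriv ψ 0 = -α) (hψ2 : deriv (deriv ψ) 0 = 2 * β)
    (m : ℝ → ℝ) (hm : ∀ r, m r = ψ ((a - r) ^ 2))
    (R : ℝ → ℝ)
    (hRlt : ∀ᶠ ν in nhdsWithin b (Iio b), R ν < a)
    (hRm : ∀ᶠ ν in nhdsWithin b (Iio b), m (R ν) = ν)
    (hRtend : Tendsto R (nhdsWithin b (Iio b)) (nhds a))
    (φ : ℝ → ℝ)
    (hφ : ∀ ν, φ ν = 2 * ∫ r in R ν..a, ν / (m r * Real.sqrt (m r ^ 2 - ν ^ 2)))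
    (θcut : ℝ) (hθcut : θcut = π / Real.sqrt (2 * α * b))
    (rν : ℝ → ℝ)
    (hrν_eq : ∀ᶠ ν in nhdsWithin b (Iio b),
      (∫ s in rν ν..a, ν / (m s * Real.sqrt (m s ^ 2 - ν ^ 2))) = φ ν - θcut)
    (hrν_tend : Tendsto rν (nhdsWithin b (Iio b)) (nhds a)) :
    (fun ν => rν ν -
        (a - (6 * b * β - α ^ 2) * Real.sqrt b * π / (16 * Real.sqrt 2 * α ^ ((5:ℝ)/2))
          * Real.arccos (ν / b) ^ 3))
      =O[nhdsWithin b (Iio b)] (fun ν => Real.arccos (ν / b) ^ 5) := by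
  have hprofile : IsEquatorProfile ψ b α β :=
    ⟨(hψ.contDiffAt (Ioo_mem_nhds (neg_lt_zero.2 hδ) hδ)).of_le
      (WithTop.coe_le_coe.2 (le_top : (3 : ℕ∞) ≤ ⊤)), hψ0, hψ1, hψ2, hb, hα⟩
  simp only [hφ, hθcut] at hrν_eq
  exact meridian_intersection_expansion_general hprofile hm hRlt hRm hRtend hrν_eq hrν_tend
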